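/- arXiv:2309.03872 — 3 statements merged into one kernel-verified Lean document; each statement's English description precedes it below -/
import Mathlib

section
/- (Lemma 4: query privacy against T colluding databases.) Let F be a finite field, let E, T ≥ 1, and let β_1, …, β_T ∈ F be pairwise distinct and nonzero. Let (Ω, ℙ) be a probability space, θ : Ω → Fin E a random variable, and Z : Ω → (Fin T → (Fin E → F)) uniformly distributed and independent of θ. Define the queries Q : Ω → (Fin T → (Fin E → F)) by Q_k(e) = 𝟙{e = θ} + Σ_{ℓ=1}^T β_k^ℓ Z_ℓ(e), where 𝟙{e = θ} ∈ F is 1 if e = θ and 0 otherwise. Then θ and Q are independent: any T colluding databases learn nothing about the queried index θ. -/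
open MeasureTheory ProbabilityTheory

/-!
The coefficients `β_k ^ ℓ`, `1 ≤ ℓ ≤ T`, form the product of the diagonal matrix of the `β_k` and
their Vandermonde matrix, both of which are invertible. Hence for each fixed value of `θ` the
queries are a bijective image of the noise, which acts as a one-time pad: conditionally on `θ` the
queries are uniform, whatever the value of `θ`.
-/

section Probability

variable {Ω 𝓧 𝓨 𝓩 : Type*} [MeasurableSpace Ω] [MeasurableSpace 𝓧] [MeasurableSpace 𝓨]
  [MeasurableSpace 𝓩] {P : Measure Ω} [IsProbabilityMeasure P] {X : Ω → 𝓧} {Y : Ω → 𝓨}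

theorem indepFun_of_ae_map_eq {ν : Measure 𝓨} {ρ : Measure 𝓩} {f : 𝓧 → 𝓨 → 𝓩}
    (hX : AEMeasurable X P) (hY : HasLaw Y ν P) (hXY : IndepFun X Y P)
    (hf : Measurable (Function.uncurry f)) (hρ : ∀ᵐ x ∂P.map X, ν.map (f x) = ρ) :
    IndepFun X (fun ω ↦ f (X ω) (Y ω)) P := by
  have hX_law : HasLaw X (P.map X) P := ⟨hX, rfl⟩
  have := hX_law.isProbabilityMeasure_iff.1 ‹_›
  have := hY.isProbabilityMeasure_iff.1 ‹_›
  have h_joint : HasLaw (fun ω ↦ (X ω, f (X ω) (Y ω))) ((P.map X).prod ρ) P :=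
    ((MeasurePreserving.id _).skew_product hf hρ).fun_comp_hasLaw
      ((indepFun_iff_hasLaw_prodMk_prod hX_law hY).1 hXY)
  have : IsProbabilityMeasure ρ := by
    obtain ⟨x, rfl⟩ := hρ.exists
    exact Measure.isProbabilityMeasure_map hf.of_uncurry_left.aemeasurable
  exact (indepFun_iff_hasLaw_prodMk_prod hX_law (measurePreserving_snd.fun_comp_hasLaw h_joint)).2
    h_joint

theorem map_uniformOfFintype_of_bijective {α β : Type*} [Fintype α] [Nonempty α] [Fintype β]
    [Nonempty β] {f : α → β} (hf : f.Bijective) :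
    (PMF.uniformOfFintype α).map f = PMF.uniformOfFintype β := by
  ext b
  obtain ⟨a, rfl⟩ := hf.surjective b
  rw [PMF.map_apply, tsum_eq_single a fun a' ha' ↦ if_neg (hf.injective.ne ha'.symm), if_pos rfl,
    PMF.uniformOfFintype_apply, PMF.uniformOfFintype_apply, Fintype.card_of_bijective hf]

theorem indepFun_of_bijective_of_uniform [Fintype 𝓨] [Nonempty 𝓨] {f : 𝓧 → 𝓨 → 𝓩}
    (hX : AEMeasurable X P) (hY : HasLaw Y (PMF.uniformOfFintype 𝓨).toMeasure P)
    (hXY : IndepFun X Y P) (hf : Measurable (Function.uncurry f))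
    (hf_bij : ∀ x, (f x).Bijective) :
    IndepFun X (fun ω ↦ f (X ω) (Y ω)) P := by
  obtain ⟨ω₀⟩ := nonempty_of_isProbabilityMeasure P
  let : Fintype 𝓩 := Fintype.ofBijective _ (hf_bij (X ω₀))
  have : Nonempty 𝓩 := ‹Nonempty 𝓨›.map (f (X ω₀))
  refine indepFun_of_ae_map_eq hX hY hXY hf (ρ := (PMF.uniformOfFintype 𝓩).toMeasure) ?_
  filter_upwards with x
  rw [PMF.toMeasure_map (hf := hf.of_uncurry_left), map_uniformOfFintype_of_bijective (hf_bij x)]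

end Probability

theorem isUnit_vandermonde_iff {R : Type*} [CommRing R] {n : ℕ} {v : Fin n → R} :
    IsUnit (Matrix.vandermonde v) ↔ Pairwise fun i j ↦ IsUnit (v i - v j) := by
  simp only [Matrix.isUnit_iff_isUnit_det, Matrix.det_vandermonde, IsUnit.prod_iff,
    Finset.mem_univ, Finset.mem_Ioi, forall_const]
  refine ⟨fun h i j hij ↦ ?_, fun h i j hij ↦ h hij.ne'⟩
  rcases hij.lt_or_gt with hlt | hgt
  · exact IsUnit.sub_iff.1 (h i j hlt)
  · exact h j i hgt

open scoped Matrix.Module in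
theorem bijective_add_sum_pow_succ_smul {R V : Type*} [CommRing R] [AddCommGroup V] [Module R V]
    {n : ℕ} {v : Fin n → R} (hv : Pairwise fun i j ↦ IsUnit (v i - v j))
    (hv_unit : ∀ i, IsUnit (v i)) (s : Fin n → V) :
    Function.Bijective fun (z : Fin n → V) (i : Fin n) ↦
      s i + ∑ j : Fin n, v i ^ ((j : ℕ) + 1) • z j := by
  have h_unit : IsUnit (Matrix.diagonal v * Matrix.vandermonde v) :=
    (Matrix.isUnit_diagonal.2 (Pi.isUnit_iff.2 hv_unit)).mul (isUnit_vandermonde_iff.2 hv)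
  convert (AddGroup.addLeft_bijective s).comp (h_unit.smul_bijective (β := Fin n → V)) using 1
  funext z i
  simp [Matrix.Module.smul_apply, pow_succ']

theorem stmt6_general {R V Ω 𝓧 : Type*} [CommRing R] [AddCommGroup V] [Module R V] [Fintype V]
    [MeasurableSpace V] [DiscreteMeasurableSpace V] [MeasurableSpace Ω] [MeasurableSpace 𝓧]
    {P : Measure Ω} [IsProbabilityMeasure P] {T : ℕ} {β : Fin T → R}
    (hβ : Pairwise fun i j ↦ IsUnit (β i - β j)) (hβ0 : ∀ k, IsUnit (β k))
    {θ : Ω → 𝓧} {Z : Ω → Fin T → V} {s : 𝓧 → Fin T → V} (hθ : AEMeasurable θ P)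
    (hs : Measurable s) (hZ : HasLaw Z (PMF.uniformOfFintype (Fin T → V)).toMeasure P)
    (hindep : IndepFun θ Z P) :
    IndepFun θ (fun ω k ↦ s (θ ω) k + ∑ ℓ : Fin T, β k ^ ((ℓ : ℕ) + 1) • Z ω ℓ) P := by
  have h_meas : Measurable (Function.uncurry
      fun x (z : Fin T → V) k ↦ s x k + ∑ ℓ : Fin T, β k ^ ((ℓ : ℕ) + 1) • z ℓ) :=
    measurable_from_prod_countable_left fun z ↦
      (measurable_of_finite fun (y : Fin T → V) k ↦
        y k + ∑ ℓ : Fin T, β k ^ ((ℓ : ℕ) + 1) • z ℓ).comp hs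
  exact indepFun_of_bijective_of_uniform hθ hZ hindep h_meas
    fun x ↦ bijective_add_sum_pow_succ_smul hβ hβ0 (s x)

/-- Query privacy against `T` colluding databases: for pairwise distinct nonzero
`β_1, …, β_T` and `Z` uniform on `Fin T → (Fin E → F)` independent of `θ`, the queries
`Q_k(e) = 𝟙{e = θ} + ∑_{ℓ=1}^T β_k^ℓ Z_ℓ(e)` are independent of `θ`. -/
theorem stmt6 {F : Type*} [Field F] [Fintype F] [MeasurableSpace F] [DiscreteMeasurableSpace F]
    {Ω : Type*} [MeasurableSpace Ω] (Pr : Measure Ω) [IsProbabilityMeasure Pr]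
    (E T : ℕ) (hE : 1 ≤ E) (hT : 1 ≤ T)
    (β : Fin T → F) (hβ : Function.Injective β) (hβ0 : ∀ k, β k ≠ 0)
    (θ : Ω → Fin E) (Z : Ω → (Fin T → (Fin E → F)))
    (hθm : Measurable θ) (hZm : Measurable Z)
    (hZ : Measure.map Z Pr = (PMF.uniformOfFintype (Fin T → (Fin E → F))).toMeasure)
    (hindep : IndepFun θ Z Pr) :
    IndepFun θ
      (fun ω (k : Fin T) (e : Fin E) =>
        (if e = θ ω then (1 : F) else 0) + ∑ ℓ : Fin T, β k ^ ((ℓ : ℕ) + 1) * Z ω ℓ e) Pr := by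
  simpa only [Pi.add_def, Finset.sum_apply, Pi.smul_apply, smul_eq_mul] using
    stmt6_general (fun i j hij ↦ (sub_ne_zero.2 (hβ.ne hij)).isUnit) (fun k ↦ (hβ0 k).isUnit)
      hθm.aemeasurable (s := fun t _ e ↦ if e = t then 1 else 0) (measurable_of_finite _)
      ⟨hZm.aemeasurable, hZ⟩ hindep
end

section
/- (Correctness of the PMA type I scheme; achievability in Theorem 1.) Let F be a field, E ≥ 1, M ≥ 1, N ≥ 1, and let β : Fin N → F be injective (β_j = 1+α_j pairwise distinct). Fix θ : Fin E, incidence vectors p : Fin M → (Fin E → F), noise vectors z : Fin M → Fin (N-1) → (Fin E → F), and masks s : Fin M → Fin N → F satisfying Σ_{i=1}^M s_{i,j} = 0 for every j. Define queries q_{i,j}(e) = 𝟙{e = θ} + Σ_{ℓ=1}^{N-1} β_j^ℓ z_{i,ℓ}(e) and answers a_{i,j} = Σ_{e} p_i(e) · q_{i,j}(e) + s_{i,j}. Let Υ be the N×N Vandermonde matrix with entries Υ_{j,ℓ} = β_j^ℓ for ℓ ∈ {0, …, N-1} (which is invertible since β is injective). Then the 0-th entry of Υ⁻¹ applied to the vector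 (Σ_{i=1}^M a_{i,j})_{j ∈ Fin N} equals Σ_{i=1}^M p_i(θ). -/
/-! Party `i`'s queries form the matrix `V * Cᵢ`, where `V` is the Vandermonde matrix of the
evaluation points and `Cᵢ` has the unit vector `e_θ` as row `0` and the noise vectors as its other
rows. The masks cancel on summation, so the summed answers are `V *ᵥ ∑ i, Cᵢ *ᵥ pᵢ`. Applying `V⁻¹`
leaves `∑ i, Cᵢ *ᵥ pᵢ`, whose entry `0` is `∑ i, e_θ ⬝ᵥ pᵢ`. -/

open Matrix

section Decoding

variable {R : Type*} [CommRing R]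

theorem isUnit_det_vandermonde {n : ℕ} {v : Fin n → R}
    (hv : Pairwise fun i j => IsUnit (v i - v j)) : IsUnit (vandermonde v).det := by
  rw [det_vandermonde]
  simp only [IsUnit.prod_iff, Finset.mem_univ, Finset.mem_Ioi, true_imp_iff]
  exact fun i j hij => hv hij.ne'

theorem nonsing_inv_mulVec_sum_mulVec_add {m ι : Type*} [Fintype m] [DecidableEq m] [Fintype ι]
    {A : Matrix m m R} (hA : IsUnit A.det) (x : ι → m → R) {s : ι → m → R}
    (hs : ∑ i, s i = 0) : A⁻¹ *ᵥ ∑ i, (A *ᵥ x i + s i) = ∑ i, x i := by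
  rw [Finset.sum_add_distrib, hs, add_zero, ← mulVec_sum, mulVec_mulVec, nonsing_inv_mul A hA,
    one_mulVec]

end Decoding

section Queries

variable {R κ : Type*} [DecidableEq κ] {n : ℕ}

/-- The coefficients of a party's queries as polynomials in the evaluation point: row `0` is the
unit vector `e_θ` selecting the desired message, and row `ℓ + 1` is the noise vector `z ℓ`. -/
def queryCoeff [Zero R] [One R] (θ : κ) (z : Fin n → κ → R) : Matrix (Fin (n + 1)) κ R :=
  of (vecCons (Pi.single θ 1) z)

theorem vandermonde_mul_queryCoeff_apply [CommRing R] (β : Fin (n + 1) → R) (θ : κ)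
    (z : Fin n → κ → R) (j : Fin (n + 1)) (e : κ) :
    (vandermonde β * queryCoeff θ z) j e
      = (if e = θ then 1 else 0) + ∑ ℓ : Fin n, β j ^ ((ℓ : ℕ) + 1) * z ℓ e := by
  simp [queryCoeff, mul_apply, Fin.sum_univ_succ, vandermonde_apply, Pi.single_apply]

theorem queryCoeff_mulVec_zero [NonAssocSemiring R] [Fintype κ] (θ : κ) (z : Fin n → κ → R)
    (p : κ → R) : (queryCoeff θ z *ᵥ p) 0 = p θ :=
  single_one_dotProduct θ p

end Queries

theorem stmt8_general {R ι κ : Type*} [CommRing R] [Fintype ι] [Fintype κ] [DecidableEq κ]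
    {n : ℕ} {β : Fin (n + 1) → R} (hβ : Pairwise fun j k => IsUnit (β j - β k))
    (θ : κ) (p : ι → κ → R) (z : ι → Fin n → κ → R)
    (s : ι → Fin (n + 1) → R) (hs : ∀ j, ∑ i, s i j = 0)
    (q : ι → Fin (n + 1) → κ → R)
    (hq : ∀ i j e, q i j e
      = (if e = θ then 1 else 0) + ∑ ℓ : Fin n, β j ^ ((ℓ : ℕ) + 1) * z i ℓ e)
    (a : ι → Fin (n + 1) → R)
    (ha : ∀ i j, a i j = (∑ e, p i e * q i j e) + s i j)
    (Vmat : Matrix (Fin (n + 1)) (Fin (n + 1)) R) (hVmat : ∀ j ℓ, Vmat j ℓ = β j ^ (ℓ : ℕ)) :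
    (Vmat⁻¹ *ᵥ fun j => ∑ i, a i j) 0 = ∑ i, p i θ := by
  obtain rfl : Vmat = vandermonde β := Matrix.ext hVmat
  have hmasks : ∑ i, s i = 0 := by
    ext j
    rw [Finset.sum_apply, hs, Pi.zero_apply]
  have hqueries (i : ι) : of (q i) = vandermonde β * queryCoeff θ (z i) := by
    ext j e
    rw [vandermonde_mul_queryCoeff_apply, of_apply, hq]
  have hanswers (i : ι) : a i = vandermonde β *ᵥ (queryCoeff θ (z i) *ᵥ p i) + s i := by
    ext j
    rw [mulVec_mulVec, ← hqueries, ha, Pi.add_apply, mulVec, dotProduct_comm]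
    rfl
  calc ((vandermonde β)⁻¹ *ᵥ fun j => ∑ i, a i j) 0
      = ((vandermonde β)⁻¹ *ᵥ
          ∑ i, (vandermonde β *ᵥ (queryCoeff θ (z i) *ᵥ p i) + s i)) 0 := by
        simp only [← hanswers, ← Finset.sum_fn]
    _ = (∑ i, queryCoeff θ (z i) *ᵥ p i) 0 := by
        rw [nonsing_inv_mulVec_sum_mulVec_add (isUnit_det_vandermonde hβ) _ hmasks]
    _ = ∑ i, p i θ := by
        simp only [Finset.sum_apply, queryCoeff_mulVec_zero]

/-- Correctness of the PMA type I scheme: the user decodes the membership count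
`∑ i, p i θ` from the summed masked answers by inverting the Vandermonde matrix. -/
theorem stmt8 {F : Type*} [Field F] (E M N : ℕ) (hE : 1 ≤ E) (hM : 1 ≤ M) (hN : 1 ≤ N)
    (β : Fin N → F) (hβ : Function.Injective β)
    (θ : Fin E) (p : Fin M → Fin E → F) (z : Fin M → Fin (N - 1) → Fin E → F)
    (s : Fin M → Fin N → F) (hs : ∀ j, ∑ i, s i j = 0)
    (q : Fin M → Fin N → Fin E → F)
    (hq : ∀ i j e, q i j e
      = (if e = θ then 1 else 0) + ∑ ℓ : Fin (N - 1), β j ^ ((ℓ : ℕ) + 1) * z i ℓ e)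
    (a : Fin M → Fin N → F)
    (ha : ∀ i j, a i j = (∑ e, p i e * q i j e) + s i j)
    (Vmat : Matrix (Fin N) (Fin N) F) (hVmat : ∀ j ℓ, Vmat j ℓ = β j ^ (ℓ : ℕ)) :
    (Vmat⁻¹ *ᵥ (fun j => ∑ i, a i j)) ⟨0, hN⟩ = ∑ i, p i θ := by
  obtain ⟨n, rfl⟩ := Nat.exists_eq_add_of_le' hN
  exact stmt8_general (fun _ _ hjk => (sub_ne_zero.mpr (hβ.ne hjk)).isUnit)
    θ p z s hs q hq a ha Vmat hVmat
end

section
/- (Correctness of the SPMA type II scheme; achievability in Theorem 3.) Let F be a field, E ≥ 1, M ≥ 1, and let N ≥ 1, μ ≥ 1, n be natural numbers with n = N + μ + 1. Let β : Fin n → F be injective. Fix θ : Fin E, incidence vectors p : Fin M → (Fin E → F), storage noise x : Fin N → (Fin E → F), query noise z : Fin μ → (Fin E → F), and server noise z' : Fin (n-1) → F. Define the encoded storage p̃_j(e) = Σ_{i=1}^M p_i(e) + Σ_{ℓ=1}^N β_j^ℓ x_ℓ(e), the queries q_j(e) = 𝟙{e = θ} + Σ_{k=1}^μ β_j^k z_k(e),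 and the answers a_j = Σ_{e} p̃_j(e) · q_j(e) + Σ_{i=1}^{n-1} β_j^i z'_i. Let Υ be the n×n Vandermonde matrix with entries Υ_{j,ℓ} = β_j^ℓ for ℓ ∈ {0, …, n-1}. Then the 0-th entry of Υ⁻¹ applied to the vector (a_j)_{j ∈ Fin n} equals Σ_{i=1}^M p_i(θ). -/
open Matrix

/-!
Viewed as a function of the evaluation point, the encoded storage and the query of each element are
polynomials of degree at most `N` and `μ` whose constant terms are the two secrets. Their products,
summed over the elements, have degree at most `N + μ < n`, and their constant term is the inner
product of the secrets. The server noise adds a polynomial of degree at most `n - 1` without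
constant term, so inverting the Vandermonde matrix still recovers that inner product.
-/

section Vandermonde

variable {R : Type*} [CommRing R] {n : ℕ} {β : Fin n → R}

theorem isUnit_det_vandermonde_iff :
    IsUnit (vandermonde β).det ↔ Pairwise fun i j ↦ IsUnit (β i - β j) := by
  have : Std.Symm fun i j ↦ IsUnit (β i - β j) :=
    ⟨fun _ _ h ↦ IsUnit.sub_iff.mp h⟩
  simp only [det_vandermonde, IsUnit.prod_iff, Finset.mem_univ, Finset.mem_Ioi, forall_true_left,
    pairwise_iff_gt]
  exact forall_comm

theorem vandermonde_mulVec_coeff {P : Polynomial R} (hP : P.natDegree < n) :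
    vandermonde β *ᵥ (fun ℓ : Fin n ↦ P.coeff ℓ) = fun j ↦ P.eval (β j) := by
  ext j
  simp only [mulVec, dotProduct, vandermonde_apply, Polynomial.eval_eq_sum_range' hP,
    Finset.sum_range, mul_comm]

theorem vandermonde_inv_mulVec_eval (hβ : Pairwise fun i j ↦ IsUnit (β i - β j))
    {P : Polynomial R} (hP : P.natDegree < n) :
    (vandermonde β)⁻¹ *ᵥ (fun j ↦ P.eval (β j)) = fun ℓ : Fin n ↦ P.coeff ℓ := by
  rw [← vandermonde_mulVec_coeff hP, mulVec_mulVec,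
    nonsing_inv_mul _ (isUnit_det_vandermonde_iff.mpr hβ), one_mulVec]

end Vandermonde

section Masking

open Polynomial

variable {R : Type*} [CommSemiring R] {m N μ : ℕ} {ι : Type*} [Fintype ι]

/-- The Shamir sharing polynomial `c + ∑ i, w i * X ^ (i + 1)`, with secret `c` and noise `w`. Its
values at the evaluation points are the shares held by the databases. -/
noncomputable def maskPoly (c : R) (w : Fin m → R) : R[X] :=
  C c + ∑ i : Fin m, X ^ ((i : ℕ) + 1) * C (w i)

theorem eval_maskPoly (c : R) (w : Fin m → R) (b : R) :
    (maskPoly c w).eval b = c + ∑ i : Fin m, b ^ ((i : ℕ) + 1) * w i := by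
  simp only [maskPoly, eval_add, eval_finsetSum, eval_mul, eval_pow, eval_X, eval_C]

theorem coeff_zero_maskPoly (c : R) (w : Fin m → R) : (maskPoly c w).coeff 0 = c := by
  simp [coeff_zero_eq_eval_zero, eval_maskPoly]

theorem natDegree_maskPoly_le (c : R) (w : Fin m → R) : (maskPoly c w).natDegree ≤ m := by
  refine natDegree_add_le_of_degree_le (natDegree_C c ▸ m.zero_le) ?_
  refine natDegree_sum_le_of_forall_le _ _ fun i _ ↦ (natDegree_mul_C_le _ _).trans ?_
  exact (natDegree_X_pow_le _).trans i.isLt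

/-- The polynomial whose value at `β j` is the answer of database `j`: the inner product of the
shares of `s` and `t`, masked by the server noise `z'`, which is a sharing of `0`. -/
noncomputable def answerPoly (s t : ι → R) (x : Fin N → ι → R) (z : Fin μ → ι → R)
    (z' : Fin m → R) : R[X] :=
  ∑ e, maskPoly (s e) (x · e) * maskPoly (t e) (z · e) + maskPoly 0 z'

variable (s t : ι → R) (x : Fin N → ι → R) (z : Fin μ → ι → R) (z' : Fin m → R)

theorem eval_answerPoly (b : R) :
    (answerPoly s t x z z').eval b =
      ∑ e, (s e + ∑ ℓ : Fin N, b ^ ((ℓ : ℕ) + 1) * x ℓ e) *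
          (t e + ∑ k : Fin μ, b ^ ((k : ℕ) + 1) * z k e) +
        ∑ i : Fin m, b ^ ((i : ℕ) + 1) * z' i := by
  simp only [answerPoly, eval_add, eval_finsetSum, eval_mul, eval_maskPoly, zero_add]

theorem coeff_zero_answerPoly : (answerPoly s t x z z').coeff 0 = s ⬝ᵥ t := by
  simp only [answerPoly, coeff_add, finsetSum_coeff, mul_coeff_zero, coeff_zero_maskPoly, add_zero,
    dotProduct]

theorem natDegree_answerPoly_le : (answerPoly s t x z z').natDegree ≤ max (N + μ) m :=
  natDegree_add_le_of_le
    (natDegree_sum_le_of_forall_le _ _ fun _ _ ↦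
      natDegree_mul_le_of_le (natDegree_maskPoly_le _ _) (natDegree_maskPoly_le _ _))
    (natDegree_maskPoly_le 0 z')

end Masking

theorem stmt10_general {R : Type*} [CommRing R] {ι : Type*} [Fintype ι] {N μ n : ℕ}
    (hn : N + μ < n) (β : Fin n → R) (hβ : Pairwise fun i j ↦ IsUnit (β i - β j))
    (s t : ι → R) (x : Fin N → ι → R) (z : Fin μ → ι → R) (z' : Fin (n - 1) → R)
    (pt : Fin n → ι → R)
    (hpt : ∀ j e, pt j e = s e + ∑ ℓ : Fin N, β j ^ ((ℓ : ℕ) + 1) * x ℓ e)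
    (q : Fin n → ι → R)
    (hq : ∀ j e, q j e = t e + ∑ k : Fin μ, β j ^ ((k : ℕ) + 1) * z k e)
    (a : Fin n → R)
    (ha : ∀ j, a j = (∑ e, pt j e * q j e) + ∑ i : Fin (n - 1), β j ^ ((i : ℕ) + 1) * z' i)
    (Vmat : Matrix (Fin n) (Fin n) R) (hVmat : ∀ j ℓ, Vmat j ℓ = β j ^ (ℓ : ℕ)) :
    (Vmat⁻¹ *ᵥ a) ⟨0, by omega⟩ = s ⬝ᵥ t := by
  have hV : Vmat = vandermonde β := Matrix.ext hVmat
  have ha_eval : a = fun j ↦ (answerPoly s t x z z').eval (β j) := by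
    ext j
    simp only [ha, hpt, hq, eval_answerPoly]
  have hdeg : (answerPoly s t x z z').natDegree < n :=
    (natDegree_answerPoly_le s t x z z').trans_lt (by omega)
  rw [hV, ha_eval, vandermonde_inv_mulVec_eval hβ hdeg]
  exact coeff_zero_answerPoly s t x z z'

/-- Correctness of the SPMA type II scheme: with `n = N + μ + 1` databases holding securely
encoded aggregated storage, the user decodes the membership count `∑ i, p i θ` by inverting
the Vandermonde matrix of the distinct evaluation points. -/
theorem stmt10 {F : Type*} [Field F] (E M N μ n : ℕ) (hE : 1 ≤ E) (hM : 1 ≤ M)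
    (hN : 1 ≤ N) (hμ : 1 ≤ μ) (hn : n = N + μ + 1)
    (β : Fin n → F) (hβ : Function.Injective β)
    (θ : Fin E) (p : Fin M → Fin E → F) (x : Fin N → Fin E → F)
    (z : Fin μ → Fin E → F) (z' : Fin (n - 1) → F)
    (pt : Fin n → Fin E → F)
    (hpt : ∀ j e, pt j e = (∑ i, p i e) + ∑ ℓ : Fin N, β j ^ ((ℓ : ℕ) + 1) * x ℓ e)
    (q : Fin n → Fin E → F)
    (hq : ∀ j e, q j e = (if e = θ then 1 else 0) + ∑ k : Fin μ, β j ^ ((k : ℕ) + 1) * z k e)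
    (a : Fin n → F)
    (ha : ∀ j, a j = (∑ e, pt j e * q j e) + ∑ i : Fin (n - 1), β j ^ ((i : ℕ) + 1) * z' i)
    (Vmat : Matrix (Fin n) (Fin n) F) (hVmat : ∀ j ℓ, Vmat j ℓ = β j ^ (ℓ : ℕ)) :
    (Vmat⁻¹ *ᵥ a) ⟨0, by omega⟩ = ∑ i, p i θ := by
  simpa [dotProduct] using stmt10_general (by omega) β
    (fun _ _ hij ↦ (sub_ne_zero.mpr (hβ.ne hij)).isUnit) _ _ x z z' pt hpt q hq a ha Vmat hVmat
end
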